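/- arXiv:1310.3130 — 2 statements merged into one kernel-verified Lean document; each statement's English description precedes it below -/
import Mathlib

section
/- Let A_a(y) = (A(y) − A(−y))/2 be the antisymmetric part of A. Then A_a is twice differentiable on ℝ and for every y ∈ ℝ, A_a''(y) + 4y A_a'(y) = (2y² − 1/2)(erf(√(2/3) y) − erf(√2 y)) + √(6/π) y e^{−2y²/3}. -/
open MeasureTheory Real Filter

/-- The error function `erf`. -/
noncomputable def erf (x : ℝ) : ℝ := (2 / Real.sqrt Real.pi) * ∫ t in (0 : ℝ)..x, Real.exp (-t ^ 2)

/-- The complementary error function `erfc`. -/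
noncomputable def erfc (x : ℝ) : ℝ := 1 - erf x

noncomputable def A₁ (y : ℝ) : ℝ :=
  -(1 / (2 * Real.sqrt (2 * Real.pi))) *
    ∫ t in Set.Ioi (0 : ℝ), Real.exp (-2 * (t - y) ^ 2) * erfc t

noncomputable def A₂ (y : ℝ) : ℝ :=
  (1 / Real.sqrt (2 * Real.pi)) *
    ∫ t in Set.Ioi (0 : ℝ),
      Real.exp (-2 * (t - y) ^ 2) * t * (Real.exp (-t ^ 2) / Real.sqrt Real.pi - t * erfc t)

noncomputable def A₃ (y : ℝ) : ℝ :=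
  (1 / 4) * (1 + erf (Real.sqrt 2 * y)) *
    (-(y * Real.exp (-2 * y ^ 2)) / Real.sqrt (2 * Real.pi) +
      (1 / 4 + y ^ 2) * (1 - erf (Real.sqrt 2 * y)))

noncomputable def A₄ (y : ℝ) : ℝ :=
  -(1 / Real.sqrt (2 * Real.pi)) *
    ∫ t₁ in Set.Ioi (0 : ℝ), ∫ t₂ in Set.Ioo (0 : ℝ) t₁,
      (1 / (t₁ - t₂)) *
        (Real.exp (-2 * (t₁ - y) ^ 2) * (erf (t₁ - t₂) + erf (Real.sqrt 2 * (t₂ - y))) +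
          Real.exp (-2 * (t₂ - y) ^ 2) * (erf (t₁ - t₂) - erf (Real.sqrt 2 * (t₁ - y))))

noncomputable def A (y : ℝ) : ℝ := A₁ y + A₂ y + A₃ y + A₄ y

/-- The antisymmetric part of `A`. -/
noncomputable def Aa (y : ℝ) : ℝ := (A y - A (-y)) / 2


lemma cpos : 0 < 2 / √π := by positivity

lemma hasDerivAt_erf (x : ℝ) : HasDerivAt erf (2 / √π * rexp (-x ^ 2)) x := by
  unfold erf
  have hc : Continuous fun t : ℝ => rexp (-t ^ 2) := by fun_prop
  exact (intervalIntegral.integral_hasDerivAt_right (hc.intervalIntegrable _ _)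
    hc.stronglyMeasurable.stronglyMeasurableAtFilter hc.continuousAt).const_mul _

lemma continuous_erf : Continuous erf :=
  continuous_iff_continuousAt.2 fun x => (hasDerivAt_erf x).continuousAt

@[fun_prop]
lemma continuous_erf_comp {X : Type*} [TopologicalSpace X] {f : X → ℝ} (hf : Continuous f) :
    Continuous fun x => erf (f x) := continuous_erf.comp hf

@[fun_prop]
lemma measurable_erf_comp {X : Type*} [MeasurableSpace X] {f : X → ℝ} (hf : Measurable f) :
    Measurable fun x => erf (f x) := continuous_erf.measurable.comp hf

lemma erf_zero : erf 0 = 0 := by simp [erf]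

lemma erf_neg (x : ℝ) : erf (-x) = -erf x := by
  unfold erf
  have h := intervalIntegral.integral_comp_neg (a := 0) (b := x) (fun t : ℝ => rexp (-t ^ 2))
  simp only [neg_sq, neg_zero] at h
  rw [intervalIntegral.integral_symm, ← h]; ring

lemma gauss_Ioi : ∫ t in Set.Ioi (0 : ℝ), rexp (-t ^ 2) = √π / 2 := by
  have := integral_gaussian_Ioi 1
  simpa using this

lemma gauss_int : Integrable fun t : ℝ => rexp (-t ^ 2) := by
  simpa using integrable_exp_neg_mul_sq (b := 1) one_pos

lemma erfc_eq (x : ℝ) : 1 - erf x = 2 / √π * ∫ t in Set.Ioi x, rexp (-t ^ 2) := by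
  have h := intervalIntegral.integral_interval_add_Ioi (μ := volume) (f := fun t : ℝ => rexp (-t ^ 2)) (a := 0) (b := x)
    gauss_int.integrableOn gauss_int.integrableOn
  rw [gauss_Ioi] at h
  unfold erf
  have h2 : √π ≠ 0 := by positivity
  have h3 : 2 / √π * (√π / 2) = 1 := by field_simp
  rw [← h3, ← h]; ring

lemma erfc_nonneg (x : ℝ) : 0 ≤ 1 - erf x := by
  rw [erfc_eq]
  have := cpos
  have : 0 ≤ ∫ t in Set.Ioi x, rexp (-t ^ 2) := integral_nonneg fun t => (exp_pos _).le
  positivity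

lemma cle : 2 / √π ≤ 2 := by
  have : 1 ≤ √π := by
    rw [Real.one_le_sqrt]; linarith [Real.pi_gt_three]
  rw [div_le_iff₀ (by positivity)]; linarith

lemma erfc_le (x : ℝ) : 1 - erf x ≤ 2 * rexp 1 * rexp (-x) := by
  rw [erfc_eq]
  have h : ∫ t in Set.Ioi x, rexp (-t ^ 2) ≤ ∫ t in Set.Ioi x, rexp 1 * rexp (-t) := by
    apply integral_mono gauss_int.integrableOn ((integrableOn_exp_neg_Ioi x).const_mul _)
    intro t
    simp only
    rw [← exp_add]
    apply exp_le_exp.2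
    nlinarith [sq_nonneg (t - 1/2)]
  rw [integral_const_mul, integral_exp_neg_Ioi] at h
  have h0 : 0 ≤ ∫ t in Set.Ioi x, rexp (-t ^ 2) := integral_nonneg fun t => (exp_pos _).le
  calc _ ≤ 2 * ∫ t in Set.Ioi x, rexp (-t ^ 2) := by gcongr; exact cle
    _ ≤ 2 * (rexp 1 * rexp (-x)) := by gcongr
    _ = _ := by ring

lemma abs_erf_le (x : ℝ) : |erf x| ≤ 1 := by
  have h1 := erfc_nonneg x
  have h2 := erfc_nonneg (-x)
  rw [erf_neg] at h2
  rw [abs_le]; constructor <;> linarith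

lemma erf_lip (a b : ℝ) : |erf a - erf b| ≤ 2 * |a - b| := by
  have := Convex.norm_image_sub_le_of_norm_hasDerivWithin_le (f := erf) (C := 2) (s := Set.univ)
    (x := b) (y := a) (f' := fun x => 2 / √π * rexp (-x ^ 2))
    (fun x _ => (hasDerivAt_erf x).hasDerivWithinAt) (fun x _ => by
      have h1 : rexp (-x ^ 2) ≤ 1 := by
        rw [exp_le_one_iff]; nlinarith [sq_nonneg x]
      have := cpos
      rw [Real.norm_of_nonneg (by positivity)]
      calc 2 / √π * rexp (-x ^ 2) ≤ 2 * 1 := mul_le_mul cle h1 (exp_pos _).le zero_le_two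
        _ = 2 := by ring) convex_univ trivial trivial
  simpa using this

lemma erf_mono {a b : ℝ} (h : a ≤ b) : erf a ≤ erf b := by
  have : Monotone erf := monotone_of_hasDerivAt_nonneg hasDerivAt_erf (fun x => by positivity)
  exact this h

/-- the Gaussian weight -/
noncomputable def G (y t : ℝ) : ℝ := rexp (-2 * (t - y) ^ 2)

lemma G_pos (y t : ℝ) : 0 < G y t := exp_pos _

@[fun_prop]
lemma G_cont (y : ℝ) : Continuous (G y) := by unfold G; fun_prop

lemma hasDerivAt_G (y t : ℝ) : HasDerivAt (G y) (-4 * (t - y) * G y t) t := by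
  unfold G
  have h : HasDerivAt (fun t : ℝ => -2 * (t - y) ^ 2) (-4 * (t - y)) t := by
    have := (((hasDerivAt_id t).sub_const y).pow 2).const_mul (-2)
    convert! this using 1; norm_num; ring
  convert! h.exp using 1; ring

lemma G_neg (y t : ℝ) : G (-y) t = G y (-t) := by
  unfold G; congr 1; ring

lemma G_integrable (y : ℝ) {f : ℝ → ℝ} (M : ℝ) (hm : Measurable f)
    (hf : ∀ t, |f t| ≤ M * (1 + t ^ 2)) : Integrable fun t => G y t * f t := by
  have h0 : Integrable fun t : ℝ => (M * (3 + 2 * y ^ 2)) * rexp (-(t - y) ^ 2) :=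
    (gauss_int.comp_sub_right y).const_mul _
  refine h0.mono' ((G_cont y).measurable.mul hm).aestronglyMeasurable (ae_of_all _ fun t => ?_)
  have hM : 0 ≤ M := by
    have := (abs_nonneg _).trans (hf 0); simpa using this
  have h1 : G y t = rexp (-(t - y) ^ 2) * rexp (-(t - y) ^ 2) := by
    unfold G; rw [← exp_add]; congr 1; ring
  have h2 : rexp (-(t - y) ^ 2) * (1 + (t - y) ^ 2) ≤ 1 := by
    calc _ ≤ rexp (-(t - y) ^ 2) * rexp ((t - y) ^ 2) := by
          gcongr; linarith [add_one_le_exp ((t - y) ^ 2)]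
      _ = 1 := by rw [← exp_add]; simp
  rw [norm_mul, Real.norm_of_nonneg (G_pos y t).le, Real.norm_eq_abs]
  calc _ ≤ G y t * (M * (1 + t ^ 2)) := by gcongr; exact (G_pos y t).le; exact hf t
    _ ≤ G y t * (M * ((3 + 2 * y ^ 2) * (1 + (t - y) ^ 2))) := by
      have := (G_pos y t).le
      gcongr
      nlinarith [sq_nonneg (t - 2 * y), sq_nonneg (y * (t - y)), sq_nonneg (t-y)]
    _ = M * (3 + 2 * y ^ 2) * rexp (-(t - y) ^ 2) * (rexp (-(t - y) ^ 2) * (1 + (t - y) ^ 2)) := by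
      rw [h1]; ring
    _ ≤ M * (3 + 2 * y ^ 2) * rexp (-(t - y) ^ 2) * 1 := by gcongr
    _ = _ := by ring

lemma odd_fold (y : ℝ) {f : ℝ → ℝ} (ho : ∀ t, f (-t) = -f t) (hi : Integrable fun t => G y t * f t) :
    (∫ t in Set.Ioi (0 : ℝ), G y t * f t) - ∫ t in Set.Ioi (0 : ℝ), G (-y) t * f t
      = ∫ t, G y t * f t := by
  have h := integral_comp_neg_Ioi (0 : ℝ) (fun t => G y t * f t)
  have h2 := intervalIntegral.integral_Iic_add_Ioi (b := (0:ℝ)) hi.integrableOn hi.integrableOn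
  simp only [ho, neg_zero] at h
  rw [← h2, ← h, ← sub_eq_zero, ← neg_eq_zero]
  simp only [G_neg, mul_neg, integral_neg]
  ring

lemma even_fold (y : ℝ) (hi : Integrable fun t => G y t) :
    (∫ t in Set.Ioi (0 : ℝ), G y t) + ∫ t in Set.Ioi (0 : ℝ), G (-y) t
      = ∫ t, G y t := by
  have h := integral_comp_neg_Ioi (0 : ℝ) (fun t => G y t)
  have h2 := intervalIntegral.integral_Iic_add_Ioi (b := (0:ℝ)) hi.integrableOn hi.integrableOn
  simp only [neg_zero] at h
  rw [← h2, ← h]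
  simp only [G_neg]
  ring

lemma G_int (y : ℝ) : Integrable (G y) := by
  simpa using G_integrable y (f := fun _ => 1) 1 measurable_const (fun t => by simp; positivity)

lemma G_total (y : ℝ) : ∫ t, G y t = √(π / 2) := by
  unfold G
  rw [integral_sub_right_eq_self (fun t : ℝ => rexp (-2 * t ^ 2)) y, integral_gaussian]

lemma int_const (y : ℝ) : Integrable fun t => G y t * 1 :=
  G_integrable y 1 measurable_const (fun t => by simp; positivity)

lemma abs_le_one_add_sq (t : ℝ) : |t| ≤ 1 + t ^ 2 := by
  rw [← sq_abs]; nlinarith [sq_nonneg (|t| - 1), abs_nonneg t]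

lemma exp_sq_le_one (t : ℝ) : rexp (-t ^ 2) ≤ 1 := by
  rw [exp_le_one_iff]; nlinarith [sq_nonneg t]

lemma int_id (y : ℝ) : Integrable fun t => G y t * t :=
  G_integrable y 1 measurable_id (fun t => by
    rw [one_mul]; exact abs_le_one_add_sq t)

lemma int_sq (y : ℝ) : Integrable fun t => G y t * t ^ 2 :=
  G_integrable y 1 (by fun_prop) (fun t => by
    rw [one_mul, abs_of_nonneg (sq_nonneg t)]; linarith)

lemma int_erf (y : ℝ) : Integrable fun t => G y t * erf t :=
  G_integrable y 1 (by fun_prop) (fun t => by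
    nlinarith [abs_erf_le t, sq_nonneg t])

lemma int_t_erf (y : ℝ) : Integrable fun t => G y t * (t * erf t) :=
  G_integrable y 1 (by fun_prop) (fun t => by
    rw [abs_mul, one_mul]
    calc |t| * |erf t| ≤ |t| * 1 := by gcongr; exact abs_erf_le t
      _ ≤ _ := by rw [mul_one]; exact abs_le_one_add_sq t)

lemma int_sq_erf (y : ℝ) : Integrable fun t => G y t * (t ^ 2 * erf t) :=
  G_integrable y 1 (by fun_prop) (fun t => by
    rw [abs_mul, one_mul, abs_of_nonneg (sq_nonneg t)]
    calc t ^ 2 * |erf t| ≤ t ^ 2 * 1 := by gcongr; exact abs_erf_le t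
      _ ≤ _ := by linarith)

lemma int_e (y : ℝ) : Integrable fun t => G y t * rexp (-t ^ 2) :=
  G_integrable y 1 (by fun_prop) (fun t => by
    rw [abs_of_pos (exp_pos _)]; nlinarith [exp_sq_le_one t, sq_nonneg t])

lemma int_t_e (y : ℝ) : Integrable fun t => G y t * (t * rexp (-t ^ 2)) :=
  G_integrable y 1 (by fun_prop) (fun t => by
    rw [abs_mul, one_mul, abs_of_pos (exp_pos _)]
    calc |t| * rexp (-t ^ 2) ≤ |t| * 1 := by gcongr; exact exp_sq_le_one t
      _ ≤ _ := by rw [mul_one]; exact abs_le_one_add_sq t)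

lemma J0_eq (y : ℝ) : ∫ t, G y t * rexp (-t ^ 2) = √(π / 3) * rexp (-2 * y ^ 2 / 3) := by
  have h : ∀ t, G y t * rexp (-t ^ 2) = rexp (-3 * (t - 2 * y / 3) ^ 2) * rexp (-2 * y ^ 2 / 3) := by
    intro t; unfold G; rw [← exp_add, ← exp_add]; congr 1; ring
  simp_rw [h]
  rw [integral_mul_const, integral_sub_right_eq_self (fun t : ℝ => rexp (-3 * t ^ 2)),
    integral_gaussian]

lemma hasDerivAt_e (t : ℝ) : HasDerivAt (fun t : ℝ => rexp (-t ^ 2)) (-2 * t * rexp (-t ^ 2)) t := by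
  have h : HasDerivAt (fun t : ℝ => -t ^ 2) (-2 * t) t := by
    convert! (hasDerivAt_pow 2 t).neg using 1; norm_num
  convert! h.exp using 1; ring

lemma J1_eq (y : ℝ) : ∫ t, G y t * (t * rexp (-t ^ 2)) = 2 * y / 3 * ∫ t, G y t * rexp (-t ^ 2) := by
  have h := integral_eq_zero_of_hasDerivAt_of_integrable (f := fun t => G y t * rexp (-t ^ 2))
    (f' := fun t => (-6) * (G y t * (t * rexp (-t ^ 2))) + (4 * y) * (G y t * rexp (-t ^ 2)))
    (fun t => by
      convert! (hasDerivAt_G y t).mul (hasDerivAt_e t) using 1; ring)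
    (((int_t_e y).const_mul _).add ((int_e y).const_mul _)) (int_e y)
  rw [integral_add ((int_t_e y).const_mul _) ((int_e y).const_mul _), integral_const_mul,
    integral_const_mul] at h
  linarith

lemma I1_eq (y : ℝ) : ∫ t, G y t * (t * erf t) =
    y * (∫ t, G y t * erf t) + 2 / √π / 4 * ∫ t, G y t * rexp (-t ^ 2) := by
  have i1 := (int_t_erf y).const_mul (-4)
  have i2 := (int_erf y).const_mul (4 * y)
  have i3 := (int_e y).const_mul (2 / √π)
  have h := integral_eq_zero_of_hasDerivAt_of_integrable (f := fun t => G y t * erf t)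
    (f' := fun t => (-4) * (G y t * (t * erf t)) + (4 * y) * (G y t * erf t)
      + (2 / √π) * (G y t * rexp (-t ^ 2)))
    (fun t => by
      convert! (hasDerivAt_G y t).mul (hasDerivAt_erf t) using 1; ring)
    ((i1.add i2).add i3) (int_erf y)
  rw [integral_add (by exact i1.add i2) i3, integral_add i1 i2, integral_const_mul,
    integral_const_mul, integral_const_mul] at h
  linarith

lemma I2_eq (y : ℝ) : ∫ t, G y t * (t ^ 2 * erf t) =
    (∫ t, G y t * erf t) / 4 + y * (∫ t, G y t * (t * erf t)) +
      2 / √π / 4 * ∫ t, G y t * (t * rexp (-t ^ 2)) := by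
  have i1 := (int_sq_erf y).const_mul (-4)
  have i2 := (int_t_erf y).const_mul (4 * y)
  have i3 := (int_t_e y).const_mul (2 / √π)
  have i4 := (int_erf y)
  have h := integral_eq_zero_of_hasDerivAt_of_integrable (f := fun t => G y t * (t * erf t))
    (f' := fun t => (-4) * (G y t * (t ^ 2 * erf t)) + (4 * y) * (G y t * (t * erf t))
      + (2 / √π) * (G y t * (t * rexp (-t ^ 2))) + G y t * erf t)
    (fun t => by
      convert! (hasDerivAt_G y t).mul ((hasDerivAt_id t).mul (hasDerivAt_erf t)) using 1
      simp only [id, Pi.mul_apply]; ring)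
    (((i1.add i2).add i3).add i4) (int_t_erf y)
  rw [integral_add (by exact (i1.add i2).add i3) i4, integral_add (by exact i1.add i2) i3,
    integral_add i1 i2, integral_const_mul,
    integral_const_mul, integral_const_mul] at h
  linarith

lemma I0_eq (y : ℝ) : ∫ t, G y t * erf t = √(π / 2) * erf (√(2 / 3) * y) := by
  have hsh : ∀ y, ∫ t, G y t * erf t = ∫ s, rexp (-2 * s ^ 2) * erf (s + y) := by
    intro y
    rw [← integral_sub_right_eq_self (fun s : ℝ => rexp (-2 * s ^ 2) * erf (s + y)) y]
    simp [G]
  have hsh' : ∀ y, ∫ t, G y t * rexp (-t ^ 2) = ∫ s, rexp (-2 * s ^ 2) * rexp (-(s + y) ^ 2) := by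
    intro y
    rw [← integral_sub_right_eq_self (fun s : ℝ => rexp (-2 * s ^ 2) * rexp (-(s + y) ^ 2)) y]
    simp [G]
  have g2 : Integrable fun s : ℝ => rexp (-2 * s ^ 2) := integrable_exp_neg_mul_sq two_pos
  have hd : ∀ y, HasDerivAt (fun y => ∫ s, rexp (-2 * s ^ 2) * erf (s + y))
      (∫ s, rexp (-2 * s ^ 2) * (2 / √π * rexp (-(s + y) ^ 2))) y := by
    intro y
    refine (hasDerivAt_integral_of_dominated_loc_of_deriv_le (s := Set.univ)
      (F := fun y s => rexp (-2 * s ^ 2) * erf (s + y))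
      (F' := fun y s => rexp (-2 * s ^ 2) * (2 / √π * rexp (-(s + y) ^ 2)))
      (bound := fun s => rexp (-2 * s ^ 2) * 2) univ_mem ?_ ?_ ?_ ?_ ?_ ?_).2
    · exact Eventually.of_forall fun y => (by fun_prop : Measurable _).aestronglyMeasurable
    · refine g2.mono' (by fun_prop : Measurable _).aestronglyMeasurable (ae_of_all _ fun s => ?_)
      rw [norm_mul, Real.norm_of_nonneg (exp_pos _).le, Real.norm_eq_abs]
      exact mul_le_of_le_one_right (exp_pos _).le (abs_erf_le _)
    · exact (by fun_prop : Measurable _).aestronglyMeasurable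
    · refine ae_of_all _ fun s y _ => ?_
      rw [norm_mul, Real.norm_of_nonneg (exp_pos _).le, Real.norm_of_nonneg (by positivity)]
      gcongr
      calc _ ≤ (2 : ℝ) * 1 := mul_le_mul cle (exp_sq_le_one _) (exp_pos _).le zero_le_two
        _ = 2 := by ring
    · exact g2.mul_const _
    · refine ae_of_all _ fun s y _ => ?_
      have := (hasDerivAt_erf (s + y)).comp_const_add s y
      exact this.const_mul _
  have hd2 : ∀ y, HasDerivAt (fun y => √(π / 2) * erf (√(2 / 3) * y))
      (√(π / 2) * (2 / √π * rexp (-(√(2 / 3) * y) ^ 2) * √(2 / 3))) y := by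
    intro y
    have h1 : HasDerivAt (fun y : ℝ => √(2 / 3) * y) (√(2 / 3)) y := by
      simpa using (hasDerivAt_id y).const_mul (√(2 / 3))
    exact ((hasDerivAt_erf _).comp y h1).const_mul _
  have hs : √(π / 2) * √(2 / 3) = √(π / 3) := by
    rw [← Real.sqrt_mul (by positivity)]; congr 1; ring
  have hz := is_const_of_deriv_eq_zero (f := fun y => (∫ s, rexp (-2 * s ^ 2) * erf (s + y)) -
    √(π / 2) * erf (√(2 / 3) * y)) (fun y => ((hd y).sub (hd2 y)).differentiableAt)
    (fun y => by
      refine ((hd y).sub (hd2 y)).deriv.trans ?_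
      have e : ∀ s : ℝ, rexp (-2 * s ^ 2) * (2 / √π * rexp (-(s + y) ^ 2)) =
        2 / √π * (rexp (-2 * s ^ 2) * rexp (-(s + y) ^ 2)) := fun s => by ring
      simp_rw [e]
      rw [integral_const_mul, ← hsh', J0_eq, ← hs, mul_pow, Real.sq_sqrt (by positivity)]
      have : -2 * y ^ 2 / 3 = -(2 / 3 * y ^ 2) := by ring
      rw [this]; ring) y 0
  have h0 : ∫ s, rexp (-2 * s ^ 2) * erf s = 0 := by
    have := integral_neg_eq_self (fun s : ℝ => rexp (-2 * s ^ 2) * erf s) volume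
    simp only [erf_neg, neg_sq, mul_neg, integral_neg] at this
    linarith
  simp only [add_zero, mul_zero, erf_zero, h0, sub_zero] at hz
  rw [hsh]; linarith

/-- shorthand for `erf (√2 y)` -/
noncomputable def E (y : ℝ) : ℝ := erf (√2 * y)

lemma E_neg (y : ℝ) : E (-y) = -E y := by
  unfold E; rw [mul_neg, erf_neg]

lemma hasDerivAt_E (y : ℝ) : HasDerivAt E (2 / √π * √2 * rexp (-2 * y ^ 2)) y := by
  have h1 : HasDerivAt (fun y : ℝ => √2 * y) (√2) y := by
    simpa using (hasDerivAt_id y).const_mul (√2)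
  convert! (hasDerivAt_erf _).comp y h1 using 1
  rw [mul_pow, Real.sq_sqrt (by positivity)]
  have : -(2 * y ^ 2) = -2 * y ^ 2 := by ring
  rw [this]; ring

lemma M0_eq (y : ℝ) : (∫ t in Set.Ioi (0 : ℝ), G y t) = √(π / 2) / 2 * (1 + E y) := by
  have hlim : Tendsto erf atTop (nhds 1) := by
    have h1 : Tendsto (fun x => 2 * rexp 1 * rexp (-x)) atTop (nhds 0) := by
      simpa using (Real.tendsto_exp_neg_atTop_nhds_zero).const_mul (2 * rexp 1)
    have h2 : Tendsto (fun x => 1 - erf x) atTop (nhds 0) :=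
      squeeze_zero erfc_nonneg erfc_le h1
    simpa using h2.const_sub 1
  have hlim2 : Tendsto (fun t => √(π / 2) / 2 * E (t - y)) atTop (nhds (√(π / 2) / 2 * 1)) := by
    refine Tendsto.const_mul _ (hlim.comp ?_)
    refine Tendsto.const_mul_atTop (by positivity) (tendsto_atTop_add_const_right _ (-y) tendsto_id)
  have := integral_Ioi_of_hasDerivAt_of_tendsto' (a := (0:ℝ)) (f' := G y)
    (f := fun t => √(π / 2) / 2 * E (t - y)) (fun t _ => by
      convert! ((hasDerivAt_E (t - y)).comp_sub_const t y).const_mul (√(π / 2) / 2) using 1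
      have : √(π / 2) = √π / √2 := Real.sqrt_div' _ (by positivity)
      rw [this]; unfold G; field_simp) (G_int y).integrableOn hlim2
  rw [this, zero_sub, E_neg]; ring

lemma M1_eq (y : ℝ) : (∫ t in Set.Ioi (0 : ℝ), G y t * t) =
    y * (∫ t in Set.Ioi (0 : ℝ), G y t) + G y 0 / 4 := by
  have i1 := ((int_id y).const_mul (-4)).integrableOn (s := Set.Ioi (0:ℝ))
  have i2 := ((G_int y).const_mul (4 * y)).integrableOn (s := Set.Ioi (0:ℝ))
  have hd : ∀ t, HasDerivAt (G y) ((-4) * (G y t * t) + 4 * y * G y t) t := fun t => by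
    convert! hasDerivAt_G y t using 1; ring
  have h := integral_Ioi_of_hasDerivAt_of_tendsto' (a := (0:ℝ)) (fun t _ => hd t) (i1.add i2)
    (tendsto_zero_of_hasDerivAt_of_integrableOn_Ioi (a := (0:ℝ)) (fun t _ => hd t) (i1.add i2)
      (G_int y).integrableOn)
  rw [integral_add i1 i2, integral_const_mul, integral_const_mul] at h
  linarith

lemma M2_eq (y : ℝ) : (∫ t in Set.Ioi (0 : ℝ), G y t * t ^ 2) =
    y * (∫ t in Set.Ioi (0 : ℝ), G y t * t) + (∫ t in Set.Ioi (0 : ℝ), G y t) / 4 := by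
  have i1 := ((int_sq y).const_mul (-4)).integrableOn (s := Set.Ioi (0:ℝ))
  have i2 := ((int_id y).const_mul (4 * y)).integrableOn (s := Set.Ioi (0:ℝ))
  have i3 := (G_int y).integrableOn (s := Set.Ioi (0:ℝ))
  have hd : ∀ t, HasDerivAt (fun t => G y t * t)
      ((-4) * (G y t * t ^ 2) + 4 * y * (G y t * t) + G y t) t := fun t => by
    convert! (hasDerivAt_G y t).mul (hasDerivAt_id t) using 1; simp only [id]; ring
  have h := integral_Ioi_of_hasDerivAt_of_tendsto' (a := (0:ℝ)) (fun t _ => hd t) ((i1.add i2).add i3)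
    (tendsto_zero_of_hasDerivAt_of_integrableOn_Ioi (a := (0:ℝ)) (fun t _ => hd t) ((i1.add i2).add i3)
      (int_id y).integrableOn)
  rw [integral_add (by exact i1.add i2) i3, integral_add i1 i2, integral_const_mul, integral_const_mul] at h
  linarith

lemma A1_diff (y : ℝ) : A₁ y - A₁ (-y) = -(1 / (2 * √(2 * π))) *
    (√(π / 2) * (E y - erf (√(2 / 3) * y))) := by
  have hs : ∀ y, ∫ t in Set.Ioi (0 : ℝ), rexp (-2 * (t - y) ^ 2) * erfc t =
      (∫ t in Set.Ioi (0 : ℝ), G y t) - ∫ t in Set.Ioi (0 : ℝ), G y t * erf t := by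
    intro y
    rw [← integral_sub (G_int y).integrableOn (int_erf y).integrableOn]
    congr 1; funext t; unfold G erfc; ring
  have h := odd_fold y erf_neg (int_erf y)
  rw [I0_eq] at h
  unfold A₁
  rw [hs, hs, M0_eq, M0_eq, E_neg, ← mul_sub]
  congr 1
  linarith

lemma A2_diff (y : ℝ) : A₂ y - A₂ (-y) = (1 / √(2 * π)) *
    ((y ^ 2 + 1 / 4) * (√(π / 2) * (erf (√(2 / 3) * y) - E y)) - y * rexp (-2 * y ^ 2) / 2
      + 3 / 2 * y / √π * (√(π / 3) * rexp (-2 * y ^ 2 / 3))) := by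
  have hs : ∀ y, ∫ t in Set.Ioi (0 : ℝ),
      rexp (-2 * (t - y) ^ 2) * t * (rexp (-t ^ 2) / √π - t * erfc t) =
      1 / √π * (∫ t in Set.Ioi (0 : ℝ), G y t * (t * rexp (-t ^ 2))) -
      (∫ t in Set.Ioi (0 : ℝ), G y t * t ^ 2) + ∫ t in Set.Ioi (0 : ℝ), G y t * (t ^ 2 * erf t) := by
    intro y
    have i1 := ((int_t_e y).const_mul (1 / √π)).integrableOn (s := Set.Ioi (0:ℝ))
    have i2 := (int_sq y).integrableOn (s := Set.Ioi (0:ℝ))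
    rw [← integral_const_mul, ← integral_sub i1 i2,
      ← integral_add (by exact i1.sub i2) (int_sq_erf y).integrableOn]
    congr 1; funext t; unfold G erfc; ring
  have h1 := odd_fold y (f := fun t => t ^ 2 * erf t) (fun t => by rw [erf_neg]; ring) (int_sq_erf y)
  have h2 := odd_fold y (f := fun t => t * rexp (-t ^ 2)) (fun t => by rw [neg_sq]; ring) (int_t_e y)
  rw [I2_eq, I1_eq, J1_eq, J0_eq, I0_eq] at h1
  rw [J1_eq, J0_eq] at h2
  have g0 : G y 0 = rexp (-2 * y ^ 2) := by unfold G; congr 1; ring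
  have g1 : G (-y) 0 = rexp (-2 * y ^ 2) := by unfold G; congr 1; ring
  unfold A₂
  rw [hs, hs, M2_eq, M2_eq, M1_eq, M1_eq, M0_eq, M0_eq, E_neg, ← mul_sub, g0, g1]
  congr 1
  linear_combination h1 + 1 / √π * h2

lemma A3_diff (y : ℝ) : A₃ y - A₃ (-y) = -(y * rexp (-2 * y ^ 2)) / (2 * √(2 * π)) := by
  unfold A₃
  rw [mul_neg, erf_neg, neg_sq]
  field_simp
  ring

/-- the explicit part -/
noncomputable def P (y : ℝ) : ℝ := 1 / 4 * ((y ^ 2 + 3 / 4) * (erf (√(2 / 3) * y) - E y)) +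
  (1 / √(2 * π)) * (√3 / 4 * (y * rexp (-2 * y ^ 2 / 3)) - 1 / 2 * (y * rexp (-2 * y ^ 2)))

lemma Aa_eq (y : ℝ) : Aa y = P y + (A₄ y - A₄ (-y)) / 2 := by
  have h1 := A1_diff y
  have h2 := A2_diff y
  have h3 := A3_diff y
  have hc : 1 / √(2 * π) * √(π / 2) = 1 / 2 := by
    rw [Real.sqrt_mul (by positivity), Real.sqrt_div' _ (by positivity)]
    field_simp; norm_num
  have hj : √(π / 3) / √π = √3 / 3 := by
    rw [Real.sqrt_div' _ (by positivity)]
    field_simp; norm_num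
  have : (A₁ y - A₁ (-y)) + (A₂ y - A₂ (-y)) + (A₃ y - A₃ (-y)) = 2 * P y := by
    rw [h1, h2, h3]; unfold P
    have e : 1 / (2 * √(2 * π)) = 1 / √(2 * π) / 2 := by field_simp
    have e2 : -(y * rexp (-2 * y ^ 2)) / (2 * √(2 * π)) = - (1 / √(2 * π)) * (y * rexp (-2 * y ^ 2)) / 2 := by
      field_simp
    rw [e, e2]
    linear_combination ((y ^ 2 + 3 / 4) * (erf (√(2 / 3) * y) - E y)) * hc +
      1 / √(2 * π) * (3 / 2 * y * rexp (-2 * y ^ 2 / 3)) * hj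
  unfold Aa A
  linarith

lemma P_ode : ∃ P' P'' : ℝ → ℝ, (∀ y, HasDerivAt P (P' y) y) ∧ (∀ y, HasDerivAt P' (P'' y) y) ∧
    ∀ y, P'' y + 4 * y * P' y = (2 * y ^ 2 + 1 / 2) * (erf (√(2 / 3) * y) - E y) +
          √(6 / π) * y * rexp (-2 * y ^ 2 / 3) := by
  have hE := hasDerivAt_E
  have hD : ∀ y, HasDerivAt (fun y => erf (√(2 / 3) * y)) (2 / √π * √(2 / 3) * rexp (-2 * y ^ 2 / 3)) y := by
    intro y
    have h1 : HasDerivAt (fun y : ℝ => √(2 / 3) * y) (√(2 / 3)) y := by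
      simpa using (hasDerivAt_id y).const_mul (√(2 / 3))
    convert! (hasDerivAt_erf _).comp y h1 using 1
    rw [mul_pow, Real.sq_sqrt (by positivity)]
    have : -(2 / 3 * y ^ 2) = -2 * y ^ 2 / 3 := by ring
    rw [this]; ring
  have hg : ∀ y, HasDerivAt (fun y : ℝ => rexp (-2 * y ^ 2)) (-4 * y * rexp (-2 * y ^ 2)) y := by
    intro y
    have := ((hasDerivAt_pow 2 y).const_mul (-2)).exp
    convert! this using 1; norm_num; ring
  have he : ∀ y, HasDerivAt (fun y : ℝ => rexp (-2 * y ^ 2 / 3)) (-4 / 3 * y * rexp (-2 * y ^ 2 / 3)) y := by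
    intro y
    have := (((hasDerivAt_pow 2 y).const_mul (-2)).div_const 3).exp
    convert! this using 1; norm_num; ring
  have hp : ∀ y : ℝ, HasDerivAt (fun y : ℝ => y ^ 2 + 3 / 4) (2 * y) y := by
    intro y
    convert! (hasDerivAt_pow 2 y).add_const (3 / 4) using 1; norm_num
  have hi : ∀ y : ℝ, HasDerivAt (fun y : ℝ => y) 1 y := hasDerivAt_id
  have h2i : ∀ y : ℝ, HasDerivAt (fun y : ℝ => 2 * y) 2 y := fun y => by
    simpa using (hasDerivAt_id y).const_mul 2
  have hm4 : ∀ y : ℝ, HasDerivAt (fun y : ℝ => -4 * y) (-4) y := fun y => by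
    simpa using (hasDerivAt_id y).const_mul (-4)
  have hm43 : ∀ y : ℝ, HasDerivAt (fun y : ℝ => -4 / 3 * y) (-4 / 3) y := fun y => by
    simpa using (hasDerivAt_id y).const_mul (-4 / 3)
  have hPd := fun y => ((((hp y).mul ((hD y).sub (hE y))).const_mul (1 / 4)).add
    (((((hi y).mul (he y)).const_mul (√3 / 4)).sub (((hi y).mul (hg y)).const_mul (1 / 2))).const_mul
      (1 / √(2 * π))))
  have hPdd := fun y => (((((h2i y).mul ((hD y).sub (hE y))).add ((hp y).mul
      (((he y).const_mul (2 / √π * √(2 / 3))).sub ((hg y).const_mul (2 / √π * √2))))).const_mul (1 / 4)).add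
    ((((((he y).const_mul 1).add ((hi y).mul ((hm43 y).mul (he y)))).const_mul (√3 / 4)).sub
      ((((hg y).const_mul 1).add ((hi y).mul ((hm4 y).mul (hg y)))).const_mul (1 / 2))).const_mul
      (1 / √(2 * π))))
  refine ⟨_, _, fun y => hPd y, fun y => hPdd y, fun y => ?_⟩
  simp only [Pi.mul_apply, Pi.sub_apply]
  have s23 : √(2 / 3) = √2 * √3 / 3 := by
    rw [Real.sqrt_div' _ (by positivity)]
    field_simp; norm_num
  have s6 : √(6 / π) = √2 * √3 / √π := by
    rw [Real.sqrt_div' _ (by positivity), ← Real.sqrt_mul (by positivity)]; norm_num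
  have s2p : 1 / √(2 * π) = √2 / 2 / √π := by
    rw [Real.sqrt_mul (by positivity)]
    field_simp; norm_num
  have e3 : erf (√2 * √3 / 3 * y) = erf (√(2 / 3) * y) := by rw [s23]
  rw [s2p, s6]
  generalize erf (√(2 / 3) * y) = u
  generalize E y = v
  rw [s23]
  ring

/-- the kernel of the double integral with the Gaussian factor pulled out -/
noncomputable def k (r z : ℝ) : ℝ :=
  1 / r * (rexp (4 * r * z - 2 * r ^ 2) * (erf r - E z) + (erf r - E (r - z)))

lemma abs_E_le (x : ℝ) : |E x| ≤ 1 := abs_erf_le _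

lemma E_cont : Continuous E := by unfold E; fun_prop

lemma measurable_k : Measurable fun p : ℝ × ℝ => k p.1 p.2 := by
  unfold k E; fun_prop

lemma sqrt2_bounds : 1 ≤ √2 ∧ √2 ≤ 2 := by
  constructor
  · rw [Real.one_le_sqrt]; norm_num
  · rw [Real.sqrt_le_left (by norm_num)]; norm_num

lemma abs_sub_le_two (a b : ℝ) : |erf a - E b| ≤ 2 := by
  have h1 := abs_le.1 (abs_erf_le a)
  have h2 := abs_le.1 (abs_E_le b)
  rw [abs_le]; constructor <;> linarith

lemma q_le {Y r z : ℝ} (hr : 0 ≤ r) (hz : z ≤ Y) :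
    rexp (4 * r * z - 2 * r ^ 2) ≤ rexp ((4 * Y + 1) ^ 2 / 8) * rexp (-r) := by
  rw [← exp_add]
  apply exp_le_exp.2
  nlinarith [sq_nonneg (4 * r - (4 * Y + 1)), mul_le_mul_of_nonneg_left hz hr]

lemma q_sub_one {Y r z : ℝ} (hY : 0 ≤ Y) (hr : 0 < r) (hr1 : r ≤ 1) (hz : z ≤ Y) :
    |rexp (4 * r * z - 2 * r ^ 2) - 1| ≤ r * (4 * |z| + 2) * rexp (4 * Y) := by
  set x := 4 * r * z - 2 * r ^ 2 with hx
  have hxa : |x| ≤ r * (4 * |z| + 2) := by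
    have : x = r * (4 * z - 2 * r) := by rw [hx]; ring
    rw [this, abs_mul, abs_of_pos hr]
    gcongr
    have := abs_le.1 (le_refl |z|)
    rw [abs_le]; constructor <;> linarith
  have hxY : x ≤ 4 * Y := by
    have : r * z ≤ Y := by
      calc r * z ≤ r * Y := by gcongr
        _ ≤ 1 * Y := by gcongr
        _ = Y := one_mul _
    nlinarith [sq_nonneg r]
  have h1Y : 1 ≤ rexp (4 * Y) := by rw [one_le_exp_iff]; linarith
  have hb : 0 ≤ r * (4 * |z| + 2) := by positivity
  rcases le_total x 0 with h | h
  · have h1 : rexp x ≤ 1 := by rwa [exp_le_one_iff]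
    rw [abs_of_nonpos (by linarith)]
    have := add_one_le_exp x
    have h2 : -x ≤ |x| := neg_le_abs x
    nlinarith
  · have h1 : 1 ≤ rexp x := by rwa [one_le_exp_iff]
    rw [abs_of_nonneg (by linarith)]
    have h2 : rexp x - 1 ≤ x * rexp x := by
      have h3 := add_one_le_exp (-x)
      have h4 : rexp (-x) * rexp x = 1 := by rw [← exp_add]; simp
      nlinarith [exp_pos x]
    calc _ ≤ x * rexp x := h2
      _ ≤ |x| * rexp (4 * Y) := by gcongr; exact le_abs_self x
      _ ≤ _ := by gcongr

lemma k_bound (Y : ℝ) (hY : 0 ≤ Y) : ∃ C : ℝ, 0 ≤ C ∧ ∀ r z : ℝ, 0 < r → z ≤ Y →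
    |k r z| ≤ C * (1 + |z|) * rexp (-r) := by
  refine ⟨16 * rexp (4 * Y) * rexp 1 + 2 * rexp ((4 * Y + 1) ^ 2 / 8) + 2 * rexp 1
    + 2 * rexp 1 * rexp (2 * Y), by positivity, fun r z hr hz => ?_⟩
  have hz0 := abs_nonneg z
  have hs := sqrt2_bounds
  rcases le_total r 1 with h1 | h1
  · have hq := q_sub_one hY hr h1 hz
    have e : rexp (4 * r * z - 2 * r ^ 2) * (erf r - E z) + (erf r - E (r - z)) =
      (rexp (4 * r * z - 2 * r ^ 2) - 1) * (erf r - E z) + 2 * (erf r - erf 0)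
        - (E (r - z) - E (-z)) := by rw [erf_zero, E_neg]; ring
    have b1 : |(rexp (4 * r * z - 2 * r ^ 2) - 1) * (erf r - E z)| ≤
        r * (4 * |z| + 2) * rexp (4 * Y) * 2 := by
      rw [abs_mul]
      exact mul_le_mul hq (abs_sub_le_two _ _) (abs_nonneg _) (by positivity)
    have b2 : |2 * (erf r - erf 0)| ≤ 4 * r := by
      have := erf_lip r 0
      rw [sub_zero, abs_of_pos hr] at this
      rw [abs_mul, abs_two]; linarith
    have b3 : |E (r - z) - E (-z)| ≤ 4 * r := by
      have := erf_lip (√2 * (r - z)) (√2 * (-z))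
      have e2 : √2 * (r - z) - √2 * (-z) = √2 * r := by ring
      rw [e2, abs_of_nonneg (a := √2 * r) (by positivity)] at this
      unfold E
      nlinarith
    have h1Y : 1 ≤ rexp (4 * Y) := by rw [one_le_exp_iff]; linarith
    have b4 : |rexp (4 * r * z - 2 * r ^ 2) * (erf r - E z) + (erf r - E (r - z))| ≤
        r * (16 * rexp (4 * Y) * (1 + |z|)) := by
      rw [e]
      refine ((abs_sub _ _).trans (add_le_add_left (abs_add_le _ _) _)).trans ?_
      have : 8 * r ≤ r * 8 * rexp (4 * Y) := by nlinarith
      have : 0 ≤ r * |z| * rexp (4 * Y) := by positivity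
      nlinarith [mul_pos hr (exp_pos (4 * Y))]
    have b5 : |k r z| ≤ 16 * rexp (4 * Y) * (1 + |z|) := by
      unfold k
      rw [abs_mul, abs_of_pos (by positivity : 0 < 1 / r), one_div, inv_mul_le_iff₀ hr]
      exact b4
    have h3 : 1 ≤ rexp 1 * rexp (-r) := by
      rw [← exp_add, one_le_exp_iff]; linarith
    calc |k r z| ≤ 16 * rexp (4 * Y) * (1 + |z|) * 1 := by rw [mul_one]; exact b5
      _ ≤ 16 * rexp (4 * Y) * (1 + |z|) * (rexp 1 * rexp (-r)) := by gcongr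
      _ = (16 * rexp (4 * Y) * rexp 1 + 0 + 0 + 0) * (1 + |z|) * rexp (-r) := by ring
      _ ≤ _ := by gcongr <;> positivity
  · have b1 : |rexp (4 * r * z - 2 * r ^ 2) * (erf r - E z)| ≤
        rexp ((4 * Y + 1) ^ 2 / 8) * rexp (-r) * 2 := by
      rw [abs_mul, abs_of_pos (exp_pos _)]
      exact mul_le_mul (q_le hr.le hz) (abs_sub_le_two _ _) (abs_nonneg _) (by positivity)
    have b2 := erfc_le r
    have b2' := erfc_nonneg r
    have b3' : 0 ≤ 1 - E (r - z) := erfc_nonneg _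
    have b3 : 1 - E (r - z) ≤ 2 * rexp 1 * rexp (2 * Y) * rexp (-r) := by
      have hm : E (r - Y) ≤ E (r - z) := erf_mono (by gcongr)
      have := erfc_le (√2 * (r - Y))
      have h5 : rexp (-(√2 * (r - Y))) ≤ rexp (2 * Y) * rexp (-r) := by
        rw [← exp_add]
        apply exp_le_exp.2
        nlinarith
      calc _ ≤ 1 - E (r - Y) := by linarith
        _ ≤ 2 * rexp 1 * rexp (-(√2 * (r - Y))) := this
        _ ≤ 2 * rexp 1 * (rexp (2 * Y) * rexp (-r)) := by gcongr
        _ = _ := by ring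
    have b4 : |erf r - E (r - z)| ≤ 2 * rexp 1 * rexp (-r) + 2 * rexp 1 * rexp (2 * Y) * rexp (-r) := by
      rw [abs_le]; constructor <;> linarith
    have b5 : |k r z| ≤ (2 * rexp ((4 * Y + 1) ^ 2 / 8) + 2 * rexp 1
        + 2 * rexp 1 * rexp (2 * Y)) * rexp (-r) := by
      unfold k
      rw [abs_mul, abs_of_pos (by positivity : 0 < 1 / r)]
      have : 1 / r ≤ 1 := by rw [div_le_one hr]; exact h1
      refine (mul_le_of_le_one_left (abs_nonneg _) this).trans ((abs_add_le _ _).trans ?_)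
      linarith
    calc _ ≤ _ := b5
      _ = (0 + 2 * rexp ((4 * Y + 1) ^ 2 / 8) + 2 * rexp 1
        + 2 * rexp 1 * rexp (2 * Y)) * 1 * rexp (-r) := by ring
      _ ≤ _ := by gcongr <;> first | positivity | linarith

lemma exp_neg_int : IntegrableOn (fun r : ℝ => rexp (-r)) (Set.Ioi 0) := integrableOn_exp_neg_Ioi 0

lemma k_meas (z : ℝ) : Measurable fun r => k r z := by unfold k E; fun_prop

lemma k_int (z : ℝ) : IntegrableOn (fun r => k r z) (Set.Ioi 0) := by
  obtain ⟨C, hC, hb⟩ := k_bound |z| (abs_nonneg z)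
  refine (exp_neg_int.const_mul (C * (1 + |z|))).mono' (k_meas z).aestronglyMeasurable ?_
  filter_upwards [ae_restrict_mem measurableSet_Ioi] with r hr
  exact hb r z hr (le_abs_self z)

/-- the inner integral -/
noncomputable def K (z : ℝ) : ℝ := ∫ r in Set.Ioi (0 : ℝ), k r z

/-- its derivative -/
noncomputable def K' (z : ℝ) : ℝ :=
  ∫ r in Set.Ioi (0 : ℝ), 4 * (rexp (4 * r * z - 2 * r ^ 2) * (erf r - E z))

lemma hasDerivAt_k {r : ℝ} (hr : 0 < r) (z : ℝ) :
    HasDerivAt (fun z => k r z) (4 * (rexp (4 * r * z - 2 * r ^ 2) * (erf r - E z))) z := by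
  have h1 : HasDerivAt (fun z => 4 * r * z - 2 * r ^ 2) (4 * r) z := by
    simpa using ((hasDerivAt_id z).const_mul (4 * r)).sub_const (2 * r ^ 2)
  have h2 : HasDerivAt (fun z => E (r - z)) (-(2 / √π * √2 * rexp (-2 * (r - z) ^ 2))) z :=
    (hasDerivAt_E (r - z)).comp_const_sub r z
  have := ((h1.exp.mul ((hasDerivAt_E z).const_sub (erf r))).add (h2.const_sub (erf r))).const_mul (1 / r)
  convert! this using 1
  have e : rexp (-2 * (r - z) ^ 2) = rexp (4 * r * z - 2 * r ^ 2) * rexp (-2 * z ^ 2) := by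
    rw [← exp_add]; congr 1; ring
  rw [e]
  field_simp
  ring

lemma hasDerivAt_K (z : ℝ) : HasDerivAt K (K' z) z := by
  have hmeas : ∀ z, Measurable fun r => 4 * (rexp (4 * r * z - 2 * r ^ 2) * (erf r - E z)) := by
    intro z; fun_prop
  refine (hasDerivAt_integral_of_dominated_loc_of_deriv_le (s := Set.Iio (z + 1))
    (F := fun z r => k r z)
    (F' := fun z r => 4 * (rexp (4 * r * z - 2 * r ^ 2) * (erf r - E z)))
    (bound := fun r => (8 * rexp ((4 * (z + 1) + 1) ^ 2 / 8)) * rexp (-r))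
    (Iio_mem_nhds (by linarith)) ?_ (k_int z) ?_ ?_ (exp_neg_int.const_mul _) ?_).2
  · exact Eventually.of_forall fun z => (k_meas z).aestronglyMeasurable
  · exact (hmeas z).aestronglyMeasurable
  · filter_upwards [ae_restrict_mem measurableSet_Ioi] with r hr x hx
    rw [Real.norm_eq_abs, abs_mul, abs_mul, abs_of_pos (exp_pos _), abs_of_pos (by norm_num : (0:ℝ) < 4)]
    have := mul_le_mul (q_le (Set.mem_Ioi.1 hr).le (Set.mem_Iio.1 hx).le) (abs_sub_le_two r x) (abs_nonneg _) (by positivity)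
    linarith
  · filter_upwards [ae_restrict_mem measurableSet_Ioi] with r hr x _
    exact hasDerivAt_k hr x

/-- integrand after integrating out one variable -/
noncomputable def H (z : ℝ) : ℝ := rexp (-2 * z ^ 2) * K z

lemma hasDerivAt_g (y : ℝ) :
    HasDerivAt (fun y : ℝ => rexp (-2 * y ^ 2)) (-4 * y * rexp (-2 * y ^ 2)) y := by
  have := ((hasDerivAt_pow 2 y).const_mul (-2)).exp
  convert! this using 1; norm_num; ring

lemma hasDerivAt_H (z : ℝ) :
    HasDerivAt H (-4 * z * H z + rexp (-2 * z ^ 2) * K' z) z := by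
  convert! (hasDerivAt_g z).mul (hasDerivAt_K z) using 1
  unfold H; ring

lemma H_cont : Continuous H := continuous_iff_continuousAt.2 fun z => (hasDerivAt_H z).continuousAt

lemma K_bound (Y : ℝ) : ∃ C : ℝ, 0 ≤ C ∧ ∀ z ≤ Y, |K z| ≤ C * (1 + |z|) := by
  obtain ⟨C, hC, hb⟩ := k_bound |Y| (abs_nonneg Y)
  refine ⟨C, hC, fun z hz => ?_⟩
  have := norm_integral_le_of_norm_le (f := fun r => k r z) (μ := volume.restrict (Set.Ioi 0))
    (exp_neg_int.const_mul (C * (1 + |z|))) (by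
      filter_upwards [ae_restrict_mem measurableSet_Ioi] with r hr
      exact hb r z hr (hz.trans (le_abs_self Y)))
  rw [integral_const_mul, integral_exp_neg_Ioi_zero, mul_one] at this
  exact this

lemma g_lin_int : Integrable fun z : ℝ => rexp (-2 * z ^ 2) * (1 + |z|) := by
  have := G_integrable 0 (f := fun z => 1 + |z|) 2 (by fun_prop) (fun t => by
    rw [abs_of_nonneg (by positivity)]
    nlinarith [abs_le_one_add_sq t, sq_nonneg t])
  simpa [G] using this

lemma H_int (Y : ℝ) : IntegrableOn H (Set.Iic Y) := by
  obtain ⟨C, hC, hb⟩ := K_bound Y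
  refine ((g_lin_int.const_mul C).integrableOn (s := Set.Iic Y)).mono' H_cont.measurable.aestronglyMeasurable ?_
  filter_upwards [ae_restrict_mem measurableSet_Iic] with z hz
  unfold H
  rw [norm_mul, Real.norm_of_nonneg (exp_pos _).le, Real.norm_eq_abs]
  calc _ ≤ rexp (-2 * z ^ 2) * (C * (1 + |z|)) := by gcongr; exact hb z hz
    _ = _ := by ring

open Classical in
/-- the two-variable integrand, extended by zero -/
noncomputable def W (y t₁ t₂ : ℝ) : ℝ :=
  if 0 < t₂ ∧ t₂ < t₁ then rexp (-2 * (y - t₂) ^ 2) * k (t₁ - t₂) (y - t₂) else 0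

lemma W_meas (y : ℝ) : Measurable (Function.uncurry (W y)) := by
  unfold Function.uncurry W
  refine Measurable.ite ?_ ?_ measurable_const
  · exact (measurableSet_lt measurable_const measurable_snd).inter
      (measurableSet_lt measurable_snd measurable_fst)
  · refine Measurable.mul (by fun_prop) ?_
    exact measurable_k.comp (f := fun a : ℝ × ℝ => (a.1 - a.2, y - a.2)) (by fun_prop)

lemma W_int (y : ℝ) : Integrable (Function.uncurry (W y)) (volume.prod volume) := by
  obtain ⟨C, hC, hb⟩ := k_bound |y| (abs_nonneg y)
  have ha : Integrable fun t : ℝ => C * (rexp (-2 * (y - t) ^ 2) * (1 + |y - t|)) :=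
    (g_lin_int.comp_sub_left y).const_mul C
  have hbI : Integrable ((Set.Ioi (0:ℝ)).indicator fun r : ℝ => rexp (-r)) :=
    exp_neg_int.integrable_indicator measurableSet_Ioi
  have hc := ha.convolution_integrand (ContinuousLinearMap.mul ℝ ℝ) hbI
  refine hc.mono' (W_meas y).aestronglyMeasurable (ae_of_all _ fun p => ?_)
  obtain ⟨t₁, t₂⟩ := p
  simp only [Function.uncurry, ContinuousLinearMap.mul_apply', W]
  split_ifs with h
  · have h1 : t₁ - t₂ ∈ Set.Ioi (0:ℝ) := sub_pos.2 h.2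
    rw [Set.indicator_of_mem h1, norm_mul, Real.norm_of_nonneg (exp_pos _).le, Real.norm_eq_abs]
    calc _ ≤ rexp (-2 * (y - t₂) ^ 2) * (C * (1 + |y - t₂|) * rexp (-(t₁ - t₂))) := by
          gcongr; exact hb _ _ h1 (by linarith [le_abs_self y])
      _ = _ := by ring
  · rw [norm_zero]
    refine mul_nonneg (by positivity) (Set.indicator_nonneg (fun _ _ => (exp_pos _).le) _)

lemma A4_eq (y : ℝ) : A₄ y = -(1 / √(2 * π)) * ∫ z in Set.Iic y, H z := by
  unfold A₄
  congr 1
  have hL : (∫ t₁ in Set.Ioi (0 : ℝ), ∫ t₂ in Set.Ioo (0 : ℝ) t₁,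
      (1 / (t₁ - t₂)) *
        (Real.exp (-2 * (t₁ - y) ^ 2) * (erf (t₁ - t₂) + erf (Real.sqrt 2 * (t₂ - y))) +
          Real.exp (-2 * (t₂ - y) ^ 2) * (erf (t₁ - t₂) - erf (Real.sqrt 2 * (t₁ - y)))))
      = ∫ t₁, ∫ t₂, W y t₁ t₂ := by
    rw [← integral_indicator measurableSet_Ioi]
    congr 1; funext t₁
    by_cases h : 0 < t₁
    · rw [Set.indicator_of_mem (Set.mem_Ioi.2 h), ← integral_indicator measurableSet_Ioo]
      congr 1; funext t₂
      unfold W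
      by_cases h2 : 0 < t₂ ∧ t₂ < t₁
      · rw [if_pos h2, Set.indicator_of_mem (Set.mem_Ioo.2 h2)]
        have e1 : rexp (-2 * (t₁ - y) ^ 2) = rexp (-2 * (y - t₂) ^ 2) *
            rexp (4 * (t₁ - t₂) * (y - t₂) - 2 * (t₁ - t₂) ^ 2) := by
          rw [← exp_add]; congr 1; ring
        have e2 : rexp (-2 * (t₂ - y) ^ 2) = rexp (-2 * (y - t₂) ^ 2) := by congr 1; ring
        have e3 : erf (√2 * (t₂ - y)) = - E (y - t₂) := by
          rw [← E_neg]; unfold E; congr 1; ring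
        have e4 : erf (√2 * (t₁ - y)) = E (t₁ - t₂ - (y - t₂)) := by
          unfold E; congr 1; ring
        rw [e1, e2, e3, e4]; unfold k; ring
      · rw [if_neg h2, Set.indicator_of_notMem (by rwa [Set.mem_Ioo])]
    · rw [Set.indicator_of_notMem (by rwa [Set.mem_Ioi])]
      have : ∀ t₂, W y t₁ t₂ = 0 := fun t₂ => if_neg (by rintro ⟨a, b⟩; linarith)
      simp [this]
  have hR : ∫ t₂, ∫ t₁, W y t₁ t₂ = ∫ z in Set.Iic y, H z := by
    rw [integral_Iic_eq_integral_Iio, ← integral_indicator measurableSet_Iio,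
      ← integral_sub_left_eq_self ((Set.Iio y).indicator H) volume y]
    congr 1; funext t₂
    by_cases h : 0 < t₂
    · rw [Set.indicator_of_mem (Set.mem_Iio.2 (by linarith))]
      unfold H K
      rw [← integral_const_mul, ← integral_indicator measurableSet_Ioi,
        ← integral_sub_right_eq_self ((Set.Ioi (0:ℝ)).indicator
          fun r => rexp (-2 * (y - t₂) ^ 2) * k r (y - t₂)) t₂]
      congr 1; funext t₁
      unfold W
      by_cases h2 : t₂ < t₁
      · rw [if_pos ⟨h, h2⟩, Set.indicator_of_mem (Set.mem_Ioi.2 (by linarith))]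
      · rw [if_neg (by tauto), Set.indicator_of_notMem (by rw [Set.mem_Ioi]; linarith)]
    · rw [Set.indicator_of_notMem (by rw [Set.mem_Iio]; linarith)]
      have : ∀ t₁, W y t₁ t₂ = 0 := fun t₁ => if_neg (by tauto)
      simp [this]
  rw [hL, integral_integral_swap (W_int y), hR]

lemma hasDerivAt_A4 (y : ℝ) : HasDerivAt A₄ (-(1 / √(2 * π)) * H y) y := by
  have e : A₄ = fun y => -(1 / √(2 * π)) * ((∫ z in Set.Iic (0:ℝ), H z) + ∫ z in (0:ℝ)..y, H z) := by
    funext y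
    rw [A4_eq, ← intervalIntegral.integral_Iic_sub_Iic (H_int 0) (H_int y)]; ring
  rw [e]
  exact ((intervalIntegral.integral_hasDerivAt_right (H_cont.intervalIntegrable _ _)
    H_cont.stronglyMeasurable.stronglyMeasurableAtFilter H_cont.continuousAt).const_add _).const_mul _

lemma gK' (y : ℝ) : rexp (-2 * y ^ 2) * K' y =
    4 * ((∫ r in Set.Ioi (0 : ℝ), G y r * erf r) - E y * ∫ r in Set.Ioi (0 : ℝ), G y r) := by
  unfold K'
  rw [← integral_const_mul, ← integral_const_mul,
    ← integral_sub (int_erf y).integrableOn ((G_int y).integrableOn.const_mul _), ← integral_const_mul]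
  congr 1; funext r
  have e : G y r = rexp (-2 * y ^ 2) * rexp (4 * r * y - 2 * r ^ 2) := by
    unfold G; rw [← exp_add]; congr 1; ring
  rw [e]; ring

lemma gK'_diff (y : ℝ) : rexp (-2 * y ^ 2) * K' y - rexp (-2 * (-y) ^ 2) * K' (-y) =
    4 * (√(π / 2) * (erf (√(2 / 3) * y) - E y)) := by
  have h1 := odd_fold y erf_neg (int_erf y)
  have h2 := even_fold y (G_int y)
  rw [I0_eq] at h1
  rw [G_total] at h2
  rw [gK', gK', E_neg]
  linear_combination 4 * h1 - 4 * E y * h2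

/-- `A_a` is twice differentiable and satisfies the ODE
`A_a'' + 4y A_a' = (2y² − 1/2)(erf(√(2/3) y) − erf(√2 y)) + √(6/π) y e^{−2y²/3}`. -/
theorem Aa_ode :
    (∀ y : ℝ, DifferentiableAt ℝ Aa y) ∧
    (∀ y : ℝ, DifferentiableAt ℝ (deriv Aa) y) ∧
    ∀ y : ℝ,
      deriv (deriv Aa) y + 4 * y * deriv Aa y =
        (2 * y ^ 2 - 1 / 2) * (erf (Real.sqrt (2 / 3) * y) - erf (Real.sqrt 2 * y)) +
          Real.sqrt (6 / Real.pi) * y * Real.exp (-2 * y ^ 2 / 3) := by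
  obtain ⟨P', P'', hP, hP', hode⟩ := P_ode
  have hA : Aa = fun y => P y + (A₄ y - A₄ (-y)) / 2 := funext Aa_eq
  have hneg : ∀ {f : ℝ → ℝ} {f' y : ℝ}, HasDerivAt f f' (-y) → HasDerivAt (fun y => f (-y)) (-f') y := by
    intro f f' y h
    have := h.comp y (hasDerivAt_neg y)
    rw [mul_neg_one] at this
    exact this
  have h1 : ∀ y, HasDerivAt Aa (P' y + (-(1 / √(2 * π)) * H y - -(-(1 / √(2 * π)) * H (-y))) / 2) y := by
    intro y
    rw [hA]
    exact (hP y).add (((hasDerivAt_A4 y).sub (hneg (hasDerivAt_A4 (-y)))).div_const 2)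
  have hd : deriv Aa = fun y => P' y + (-(1 / √(2 * π)) * H y - -(-(1 / √(2 * π)) * H (-y))) / 2 :=
    funext fun y => (h1 y).deriv
  have h2 := fun y => (hP' y).add ((((hasDerivAt_H y).const_mul (-(1 / √(2 * π)))).sub
    (((hneg (hasDerivAt_H (-y))).const_mul (-(1 / √(2 * π)))).neg)).div_const 2)
  refine ⟨fun y => (h1 y).differentiableAt, fun y => ?_, fun y => ?_⟩
  · rw [hd]; exact (h2 y).differentiableAt
  · have e := (congrArg (fun f => deriv f y) hd).trans (h2 y).deriv
    rw [e, hd]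
    have hc : 1 / √(2 * π) * √(π / 2) = 1 / 2 := by
      rw [Real.sqrt_mul (by positivity), Real.sqrt_div' _ (by positivity)]
      field_simp; norm_num
    have ho := hode y
    have hk := gK'_diff y
    change _ = (2 * y ^ 2 - 1 / 2) * (erf (√(2 / 3) * y) - E y) + _
    linear_combination ho - 1 / √(2 * π) / 2 * hk - 2 * (erf (√(2 / 3) * y) - E y) * hc
end

section
/- For every y ≤ 0, A₁(y) = −(1/8) erfc(−√2 y) + (1/(2√(6π))) ∫_{−y}^∞ e^{−2t²/3} erfc(2t/√3) dt. -/
open MeasureTheory Real Filter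

lemma shift_Ioi (f : ℝ → ℝ) (a c : ℝ) :
    ∫ x in Set.Ioi a, f (x + c) = ∫ x in Set.Ioi (a + c), f x := by
  rw [← integral_indicator measurableSet_Ioi, ← integral_indicator measurableSet_Ioi,
    ← integral_add_right_eq_self ((Set.Ioi (a + c)).indicator f) c]
  congr 1
  ext x
  simp [Set.indicator]

lemma integrable_gauss : Integrable (fun t : ℝ => Real.exp (-t ^ 2)) := by
  simpa using integrable_exp_neg_mul_sq (b := 1) one_pos

lemma tail_erfc (c : ℝ) :
    ∫ t in Set.Ioi c, Real.exp (-t ^ 2) = Real.sqrt Real.pi / 2 * erfc c := by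
  have h := intervalIntegral.integral_interval_add_Ioi (a := 0) (b := c)
    integrable_gauss.integrableOn integrable_gauss.integrableOn
  have h2 := integral_gaussian_Ioi 1
  simp only [neg_mul, one_mul, div_one] at h2
  rw [h2] at h
  have hp : Real.sqrt Real.pi ≠ 0 := by positivity
  unfold erfc erf
  have h3 : ∫ t in Set.Ioi c, Real.exp (-t ^ 2)
      = Real.sqrt Real.pi / 2 - ∫ t in (0 : ℝ)..c, Real.exp (-t ^ 2) := by linarith
  rw [h3]
  field_simp

lemma tail_scaled (k b w : ℝ) (hk : 0 < k) :
    ∫ u in Set.Ioi w, Real.exp (-(k * (u - b)) ^ 2)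
      = Real.sqrt Real.pi / (2 * k) * erfc (k * (w - b)) := by
  have h1 := shift_Ioi (fun u => Real.exp (-(k * u) ^ 2)) w (-b)
  have h2 := integral_comp_mul_left_Ioi (fun u => Real.exp (-u ^ 2)) (w + -b) hk
  simp only [← sub_eq_add_neg, smul_eq_mul] at h1 h2
  rw [h1, h2, tail_erfc]
  field_simp

noncomputable def Hker (s : ℝ) (w u : ℝ) : ℝ :=
  if s < w ∧ w < u then Real.exp (-2 * u ^ 2) * Real.exp (-(w - u) ^ 2) else 0

lemma Hker_integrable (s : ℝ) :
    Integrable (Function.uncurry (Hker s)) (volume.prod volume) := by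
  have h := Integrable.convolution_integrand (μ := volume) (ν := volume)
    (ContinuousLinearMap.mul ℝ ℝ)
    (integrable_exp_neg_mul_sq (b := 2) two_pos) integrable_gauss
  have hm : MeasurableSet {p : ℝ × ℝ | s < p.1 ∧ p.1 < p.2} :=
    (measurableSet_lt measurable_const measurable_fst).inter
      (measurableSet_lt measurable_fst measurable_snd)
  refine (h.indicator hm).congr (Eventually.of_forall fun p => ?_)
  simp [Set.indicator, Function.uncurry, Hker]

lemma Hker_int_w (s u : ℝ) :
    ∫ w, Hker s w u = (Set.Ioi s).indicator
      (fun u => Real.sqrt Real.pi / 2 * (Real.exp (-2 * u ^ 2) * erf (u - s))) u := by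
  by_cases hu : s < u
  · have e : (fun w => Hker s w u) = (Set.Ioo s u).indicator
        (fun w => Real.exp (-2 * u ^ 2) * Real.exp (-(u - w) ^ 2)) := by
      ext w
      have : (w - u) ^ 2 = (u - w) ^ 2 := by ring
      simp [Set.indicator, Hker, this]
    rw [e, integral_indicator measurableSet_Ioo, ← integral_Ioc_eq_integral_Ioo,
      ← intervalIntegral.integral_of_le hu.le, intervalIntegral.integral_const_mul,
      intervalIntegral.integral_comp_sub_left (fun w => Real.exp (-w ^ 2))]
    have hp : Real.sqrt Real.pi ≠ 0 := by positivity
    simp only [Set.indicator, Set.mem_Ioi, hu, if_true, erf, sub_self]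
    field_simp
  · have e : (fun w => Hker s w u) = fun _ => 0 := by
      ext w
      rw [Hker, if_neg]
      rintro ⟨h1, h2⟩
      exact hu (h1.trans h2)
    simp [e, hu]

lemma Hker_int_u (s w : ℝ) :
    ∫ u, Hker s w u = (Set.Ioi s).indicator
      (fun w => Real.sqrt Real.pi / (2 * Real.sqrt 3) *
        (Real.exp (-2 * w ^ 2 / 3) * erfc (2 * w / Real.sqrt 3))) w := by
  by_cases hw : s < w
  · have h3 : Real.sqrt 3 ^ 2 = 3 := Real.sq_sqrt (by norm_num)
    have e : (fun u => Hker s w u) = (Set.Ioi w).indicator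
        (fun u => Real.exp (-2 * w ^ 2 / 3) * Real.exp (-(Real.sqrt 3 * (u - w / 3)) ^ 2)) := by
      ext u
      have : Real.exp (-2 * u ^ 2) * Real.exp (-(w - u) ^ 2) =
          Real.exp (-2 * w ^ 2 / 3) * Real.exp (-(Real.sqrt 3 * (u - w / 3)) ^ 2) := by
        rw [← Real.exp_add, ← Real.exp_add, mul_pow, h3]
        congr 1
        ring
      simp only [Set.indicator, Hker, this, hw, true_and, Set.mem_Ioi]
    have e2 : Real.sqrt 3 * (w - w / 3) = 2 * w / Real.sqrt 3 := by
      field_simp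
      rw [h3]
      ring
    rw [e, integral_indicator measurableSet_Ioi, integral_const_mul,
      tail_scaled _ _ _ (by positivity), e2]
    simp only [Set.indicator, Set.mem_Ioi, hw, if_true]
    ring
  · have e : (fun u => Hker s w u) = fun _ => 0 := by
      ext u
      rw [Hker, if_neg]
      rintro ⟨h1, h2⟩
      exact hw h1
    simp [e, hw]

/-- Exact alternative representation of `A₁` for `y ≤ 0`. -/
theorem A1_representation (y : ℝ) (hy : y ≤ 0) :
    A₁ y =
      -(1 / 8) * erfc (-(Real.sqrt 2) * y) +
        (1 / (2 * Real.sqrt (6 * Real.pi))) *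
          ∫ t in Set.Ioi (-y), Real.exp (-2 * t ^ 2 / 3) * erfc (2 * t / Real.sqrt 3) := by
  have hp : Real.sqrt Real.pi ≠ 0 := by positivity
  have h2 : Real.sqrt 2 ^ 2 = 2 := Real.sq_sqrt (by norm_num)
  have hsw := integral_integral_swap (Hker_integrable (-y))
  have hint := (Hker_integrable (-y)).integral_prod_right
  simp only [Function.uncurry_apply_pair] at hint
  simp only [Hker_int_w, Hker_int_u] at hsw hint
  rw [integral_indicator measurableSet_Ioi, integral_indicator measurableSet_Ioi,
    integral_const_mul, integral_const_mul] at hsw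
  rw [integrable_indicator_iff measurableSet_Ioi] at hint
  have hint' : IntegrableOn (fun u => Real.exp (-2 * u ^ 2) * erf (u - -y)) (Set.Ioi (-y)) := by
    refine (hint.const_mul (2 / Real.sqrt Real.pi)).congr (Eventually.of_forall fun u => ?_)
    field_simp
  have hg : ∫ u in Set.Ioi (-y), Real.exp (-2 * u ^ 2)
      = Real.sqrt Real.pi / (2 * Real.sqrt 2) * erfc (-(Real.sqrt 2) * y) := by
    have h := tail_scaled (Real.sqrt 2) 0 (-y) (by positivity)
    simp only [sub_zero, mul_pow, h2] at h
    simp only [neg_mul, mul_neg] at h ⊢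
    exact h
  have hA : ∫ t in Set.Ioi (0 : ℝ), Real.exp (-2 * (t - y) ^ 2) * erfc t
      = (∫ u in Set.Ioi (-y), Real.exp (-2 * u ^ 2)) -
        ∫ u in Set.Ioi (-y), Real.exp (-2 * u ^ 2) * erf (u - -y) := by
    rw [← integral_sub (integrable_exp_neg_mul_sq (b := 2) two_pos).integrableOn hint']
    have h := shift_Ioi (fun u => Real.exp (-2 * u ^ 2) - Real.exp (-2 * u ^ 2) * erf (u - -y))
      0 (-y)
    rw [zero_add] at h
    rw [← h]
    congr 1
    ext t
    simp only [erfc, sub_neg_eq_add, ← sub_eq_add_neg, sub_add_cancel]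
    ring
  have hB : ∫ u in Set.Ioi (-y), Real.exp (-2 * u ^ 2) * erf (u - -y) =
      1 / Real.sqrt 3 *
        ∫ t in Set.Ioi (-y), Real.exp (-2 * t ^ 2 / 3) * erfc (2 * t / Real.sqrt 3) := by
    have h3 : Real.sqrt 3 ≠ 0 := by positivity
    field_simp at hsw ⊢
    linarith
  have s6 : Real.sqrt (6 * Real.pi) = Real.sqrt 2 * Real.sqrt 3 * Real.sqrt Real.pi := by
    rw [← Real.sqrt_mul (by norm_num), ← Real.sqrt_mul (by norm_num)]
    norm_num
  have s2 : Real.sqrt (2 * Real.pi) = Real.sqrt 2 * Real.sqrt Real.pi :=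
    Real.sqrt_mul (by norm_num) _
  rw [A₁, hA, hB, hg, s6, s2]
  generalize (∫ t in Set.Ioi (-y), Real.exp (-2 * t ^ 2 / 3) * erfc (2 * t / Real.sqrt 3)) = J
  generalize erfc (-(Real.sqrt 2) * y) = E
  have h3 : Real.sqrt 3 ≠ 0 := by positivity
  have h2' : Real.sqrt 2 ≠ 0 := by positivity
  field_simp
  linear_combination (4 * Real.sqrt Real.pi * E * Real.sqrt 3) * h2
end
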